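/- arXiv:2010.02255 — 3 statements merged into one kernel-verified Lean document; each statement's English description precedes it below -/
import Mathlib

section
/- (Lemma: TD mean bias reduction.) Suppose X, X' are integrable with respect to P, Y, Y' are integrable with respect to P', γ > 0, B ≠ 0, and 0 < B'/B < 2/γ. Then |E[δ] − E[δ*]| < |E[X] − E[Y]|; that is, the mean conditional TD error E_θ[δ(θ,τ) | τ] has strictly smaller bias (in absolute value) than E_θ[Q_θ(s,a)] has as an estimator of E_M[Q_π^M(s,a)]. -/
open MeasureTheory

/-! The reward cancels between the two TD errors, so the bias of `δ` is
`γ B' - B = (γ B' / B - 1) B`, and the scalar factor lies in `(-1, 1)` exactly when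
`0 < B' / B < 2 / γ`. -/

/-- The one-step temporal-difference error `δ = γ Q' + r - Q` of the value `Q` at the current
state-action pair and the value `Q'` at the next one, with discount `γ` and realized reward `r`.
Values may be vectors, as for multi-objective rewards. -/
def tdError {Ω E : Type*} [AddCommGroup E] [Module ℝ E] (γ : ℝ) (r : E) (Q Q' : Ω → E) : Ω → E :=
  fun ω ↦ γ • Q' ω + r - Q ω

/-- The bias of `X` as an estimator of the mean of `Y`. The two random variables may live on
different spaces: parameters of the agent for `X`, environments for `Y`. -/
noncomputable def bias {Ω Ω' E : Type*} [MeasurableSpace Ω] [MeasurableSpace Ω']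
    [NormedAddCommGroup E] [NormedSpace ℝ E]
    (P : Measure Ω) (P' : Measure Ω') (X : Ω → E) (Y : Ω' → E) : E :=
  (∫ ω, X ω ∂P) - ∫ ω, Y ω ∂P'

section Bias

variable {Ω Ω' E : Type*} [MeasurableSpace Ω] [MeasurableSpace Ω']
  [NormedAddCommGroup E] [NormedSpace ℝ E] [CompleteSpace E]

theorem integral_tdError {μ : Measure Ω} [IsFiniteMeasure μ] {Q Q' : Ω → E}
    (hQ : Integrable Q μ) (hQ' : Integrable Q' μ) (γ : ℝ) (r : E) :
    ∫ ω, tdError γ r Q Q' ω ∂μ =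
      γ • (∫ ω, Q' ω ∂μ) + μ.real Set.univ • r - ∫ ω, Q ω ∂μ := by
  have hγQ' : Integrable (fun ω ↦ γ • Q' ω) μ := hQ'.smul γ
  have hr : Integrable (fun _ ↦ r) μ := integrable_const r
  have hsum : Integrable (fun ω ↦ γ • Q' ω + r) μ := hγQ'.add hr
  simp only [tdError]
  rw [integral_sub hsum hQ, integral_add hγQ' hr, integral_smul, integral_const]

theorem bias_tdError {P : Measure Ω} {P' : Measure Ω'}
    [IsProbabilityMeasure P] [IsProbabilityMeasure P'] {X X' : Ω → E} {Y Y' : Ω' → E}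
    (hX : Integrable X P) (hX' : Integrable X' P)
    (hY : Integrable Y P') (hY' : Integrable Y' P') (γ : ℝ) (r : E) :
    bias P P' (tdError γ r X X') (tdError γ r Y Y') =
      γ • bias P P' X' Y' - bias P P' X Y := by
  simp only [bias, integral_tdError hX hX', integral_tdError hY hY', probReal_univ, one_smul,
    smul_sub]
  abel

end Bias

theorem abs_mul_sub_lt_abs_iff {K : Type*} [Field K] [LinearOrder K] [IsStrictOrderedRing K]
    {c x y : K} (hc : 0 < c) (hx : x ≠ 0) :
    |c * y - x| < |x| ↔ 0 < y / x ∧ y / x < 2 / c := by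
  have hfactor : c * y - x = (c * (y / x) - 1) * x := by field_simp
  calc |c * y - x| < |x|
      ↔ |c * (y / x) - 1| < 1 := by
        rw [hfactor, abs_mul, mul_lt_iff_lt_one_left (abs_pos.mpr hx)]
    _ ↔ 0 < c * (y / x) ∧ c * (y / x) < 2 := by
        rw [abs_sub_lt_iff, sub_lt_iff_lt_add, sub_lt_self_iff, one_add_one_eq_two, and_comm]
    _ ↔ 0 < y / x ∧ y / x < 2 / c := by
        rw [mul_pos_iff_of_pos_left hc, lt_div_iff₀' hc]

/-- TD mean bias reduction: if the consecutive-bias ratio `B'/B` lies in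
`(0, 2/γ)`, then the mean conditional TD error has strictly smaller bias (in
absolute value) than the value estimate. -/
theorem td_mean_bias_reduction
    {Ω Ω' : Type*} [MeasurableSpace Ω] [MeasurableSpace Ω']
    (P : Measure Ω) (P' : Measure Ω')
    [IsProbabilityMeasure P] [IsProbabilityMeasure P']
    (X X' : Ω → ℝ) (Y Y' : Ω' → ℝ) (γ r : ℝ)
    (hX : Integrable X P) (hX' : Integrable X' P)
    (hY : Integrable Y P') (hY' : Integrable Y' P')
    (hγ : 0 < γ)
    (B B' : ℝ)
    (hB : B = (∫ ω, X ω ∂P) - (∫ ω, Y ω ∂P'))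
    (hB' : B' = (∫ ω, X' ω ∂P) - (∫ ω, Y' ω ∂P'))
    (hBne : B ≠ 0)
    (hρ₀ : 0 < B' / B) (hρ₂ : B' / B < 2 / γ) :
    |(∫ ω, (γ * X' ω + r - X ω) ∂P) - (∫ ω, (γ * Y' ω + r - Y ω) ∂P')|
      < |(∫ ω, X ω ∂P) - (∫ ω, Y ω ∂P')| := by
  calc |bias P P' (tdError γ r X X') (tdError γ r Y Y')|
      = |γ * B' - B| := by
        rw [bias_tdError hX hX' hY hY', hB, hB', smul_eq_mul, bias, bias]
    _ < |B| := (abs_mul_sub_lt_abs_iff hγ hBne).mpr ⟨hρ₀, hρ₂⟩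
    _ = |(∫ ω, X ω ∂P) - (∫ ω, Y ω ∂P')| := by rw [hB]
end

section
/- (Existence and uniqueness of the action-value function.) There exists a unique function q : S → A → ℝ satisfying the Bellman equation T q = q; this unique fixed point is the action-value function Q_π of the policy π. -/
/-- The Bellman operator for a deterministic policy `π`:
`(T q) s a = rbar s a + γ · ∑ s', P s a s' · q s' (π s')`. -/
def bellmanOp {S A : Type*} [Fintype S] (π : S → A) (P : S → A → S → ℝ)
    (rbar : S → A → ℝ) (γ : ℝ) (q : S → A → ℝ) : S → A → ℝ :=
  fun s a => rbar s a + γ * ∑ s', P s a s' * q s' (π s')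

/-!
The right-hand side of the Bellman equation sees `q` only through the state values
`v s = q s (π s)`, so its solutions correspond to those of the finite linear system
`v = r_π + γ P_π v`. The absolute row sums of `γ P_π` are less than `1`, so `1 - γ P_π` is strictly
diagonally dominant, hence invertible.
-/

open Function

theorem existsUnique_isFixedPt_comp_of_swap {α β : Type*} {f : α → β} {g : β → α}
    (h : ∃! y, IsFixedPt (f ∘ g) y) : ∃! x, IsFixedPt (g ∘ f) x := by
  obtain ⟨y, hy, hy_unique⟩ := h
  have bij : Set.BijOn g (fixedPoints (f ∘ g)) (fixedPoints (g ∘ f)) := bijOn_fixedPoints_comp f g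
  refine ⟨g y, bij.mapsTo hy, fun x hx => ?_⟩
  obtain ⟨z, hz, rfl⟩ := bij.surjOn hx
  rw [hy_unique z hz]

section AffineSystems

variable {K n : Type*} [NormedField K] [Fintype n] {M : Matrix n n K}

open Matrix

theorem isUnit_one_sub_of_sum_row_norm_lt_one [DecidableEq n] (hM : ∀ i, ∑ j, ‖M i j‖ < 1) :
    IsUnit (1 - M) := by
  rw [isUnit_iff_isUnit_det, isUnit_iff_ne_zero]
  refine det_ne_zero_of_sum_row_lt_diag fun i => ?_
  calc ∑ j ∈ Finset.univ.erase i, ‖(1 - M) i j‖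
      = ∑ j ∈ Finset.univ.erase i, ‖M i j‖ := by
        refine Finset.sum_congr rfl fun j hj => ?_
        rw [Matrix.sub_apply, one_apply_ne (Finset.ne_of_mem_erase hj).symm, zero_sub, norm_neg]
    _ < 1 - ‖M i i‖ := by
        linarith [hM i, Finset.sum_erase_add Finset.univ (fun j => ‖M i j‖) (Finset.mem_univ i)]
    _ ≤ ‖(1 - M) i i‖ := by
        simpa using norm_sub_norm_le (1 : K) (M i i)

theorem existsUnique_isFixedPt_add_mulVec (hM : ∀ i, ∑ j, ‖M i j‖ < 1) (b : n → K) :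
    ∃! v, IsFixedPt (fun v => b + M *ᵥ v) v := by
  classical
  have isUnit_one_sub : IsUnit (1 - M) := isUnit_one_sub_of_sum_row_norm_lt_one hM
  have bij : Bijective (1 - M).mulVec :=
    ⟨mulVec_injective_iff_isUnit.2 isUnit_one_sub, mulVec_surjective_iff_isUnit.2 isUnit_one_sub⟩
  have isFixedPt_iff (v : n → K) : IsFixedPt (fun v => b + M *ᵥ v) v ↔ (1 - M) *ᵥ v = b := by
    rw [sub_mulVec, one_mulVec, sub_eq_iff_eq_add, eq_comm]
    rfl
  simpa only [isFixedPt_iff] using bij.existsUnique b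

end AffineSystems

section Bellman

variable {S A : Type*}

/-- The restriction of a function of state-action pairs to the actions chosen by the policy `π`;
it turns action values into state values and `rbar` into the reward vector `r_π`. -/
def onPolicy (π : S → A) (q : S → A → ℝ) : S → ℝ :=
  fun s => q s (π s)

/-- The matrix `γ P_π` of discounted transition weights between states under the policy `π`: the
linear part of the Bellman equation for state values. -/
def discountedTransition (π : S → A) (P : S → A → S → ℝ) (γ : ℝ) : Matrix S S ℝ :=
  Matrix.of fun s s' => γ * P s (π s) s'

variable [Fintype S]

/-- The one-step lookahead: the action values obtained from state values `v` by collecting the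
immediate reward and then the discounted expected value of the next state. It is the half of the
Bellman operator that does not depend on the policy. -/
def lookahead (P : S → A → S → ℝ) (rbar : S → A → ℝ) (γ : ℝ) (v : S → ℝ) : S → A → ℝ :=
  fun s a => rbar s a + γ * ∑ s', P s a s' * v s'

theorem bellmanOp_eq_lookahead_comp_onPolicy (π : S → A) (P : S → A → S → ℝ) (rbar : S → A → ℝ)
    (γ : ℝ) : bellmanOp π P rbar γ = lookahead P rbar γ ∘ onPolicy π :=
  rfl

open Matrix in
theorem onPolicy_comp_lookahead (π : S → A) (P : S → A → S → ℝ) (rbar : S → A → ℝ) (γ : ℝ) :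
    onPolicy π ∘ lookahead P rbar γ =
      fun v => onPolicy π rbar + discountedTransition π P γ *ᵥ v := by
  ext v s
  simp [onPolicy, lookahead, discountedTransition, mulVec, dotProduct, Finset.mul_sum, mul_assoc]

theorem bellmanOp_existsUnique_fixedPoint_general (π : S → A) (P : S → A → S → ℝ)
    (rbar : S → A → ℝ) (γ : ℝ) (hP : ∀ s, ∑ s', |γ * P s (π s) s'| < 1) :
    ∃! q : S → A → ℝ, bellmanOp π P rbar γ q = q := by
  rw [bellmanOp_eq_lookahead_comp_onPolicy]
  apply existsUnique_isFixedPt_comp_of_swap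
  rw [onPolicy_comp_lookahead]
  exact existsUnique_isFixedPt_add_mulVec hP (onPolicy π rbar)

end Bellman

/-- Existence and uniqueness of the action-value function: there is a unique
fixed point of the Bellman operator. -/
theorem bellmanOp_existsUnique_fixedPoint {S A : Type*} [Fintype S] [Fintype A]
    [Nonempty S] [Nonempty A]
    (π : S → A) (P : S → A → S → ℝ) (rbar : S → A → ℝ) (γ : ℝ)
    (hP₀ : ∀ s a s', 0 ≤ P s a s')
    (hP₁ : ∀ s a, ∑ s', P s a s' = 1)
    (hγ₀ : 0 ≤ γ) (hγ₁ : γ < 1) :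
    ∃! q : S → A → ℝ, bellmanOp π P rbar γ q = q :=
  bellmanOp_existsUnique_fixedPoint_general π P rbar γ fun s => by
    simpa [abs_mul, abs_of_nonneg, hγ₀, hP₀, ← Finset.mul_sum, hP₁] using hγ₁
end

section
/- (Unsolvability of the consistency system for the mean weights.) Suppose E has trivial kernel and μ does not lie in the column space of E, i.e., there is no v : Fin n → ℝ with E.mulVec v = μ. Then there is no w : Fin n → ℝ with Φ(μ, E).mulVec w = μ; that is, the linear system μ = (μ·1ᵀ + E)·w arising from the first-moment Bellman consistency conditions has no solution. -/
/-- The matrix `Φ = μ·1ᵀ + E` arising from the first-moment Bellman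
consistency conditions. -/
def PhiMat {N n : ℕ} (μ : Fin N → ℝ) (E : Matrix (Fin N) (Fin n) ℝ) :
    Matrix (Fin N) (Fin n) ℝ :=
  fun i j => μ i + E i j

/-!
Modulo `range f`, the equation `f w + φ w • u = u` reads `φ w • u = u` with `u` nonzero, so
`φ w = 1`. Back in `W` this leaves `f w = 0`, although `φ` vanishes on the kernel of `f`.
For the consistency system, `f` is `E`, `u` is `μ` and `φ` sums the weights.
-/

section DivisionRing

variable {K V W : Type*} [DivisionRing K]
  [AddCommGroup V] [Module K V] [AddCommGroup W] [Module K W]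

theorem eq_one_of_add_smul_eq_self_of_notMem {p : Submodule K W} {x y : W} {c : K}
    (hx : x ∉ p) (hy : y ∈ p) (h : y + c • x = x) : c = 1 := by
  have hsmul : (1 - c) • x = y := by
    rw [sub_smul, one_smul, sub_eq_iff_eq_add, h]
  by_contra hc
  have hne : 1 - c ≠ 0 := sub_ne_zero.2 (Ne.symm hc)
  exact hx ((p.smul_mem_iff hne).1 (hsmul ▸ hy))

theorem consistency_system_unsolvable_general (f : V →ₗ[K] W) (φ : V →ₗ[K] K) {u : W}
    (hker : f.ker ≤ φ.ker) (hu : u ∉ f.range) : u ∉ (f + φ.smulRight u).range := by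
  rintro ⟨w, hw : f w + φ w • u = u⟩
  have hφ : φ w = 1 := eq_one_of_add_smul_eq_self_of_notMem hu (f.mem_range_self w) hw
  have hf : f w = 0 := by simpa [hφ] using hw
  have hφ₀ : φ w = 0 := hker hf
  exact one_ne_zero (hφ.symm.trans hφ₀)

end DivisionRing

theorem mulVecLin_phiMat {N n : ℕ} (μ : Fin N → ℝ) (E : Matrix (Fin N) (Fin n) ℝ) :
    (PhiMat μ E).mulVecLin = E.mulVecLin + (∑ j, LinearMap.proj j).smulRight μ := by
  ext j i
  simp [PhiMat, add_comm]

/-- Unsolvability of the consistency system for the mean weights: if `E` has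
trivial kernel and `μ` is not in the column space of `E`, then the system
`μ = (μ·1ᵀ + E)·w` has no solution. -/
theorem consistency_system_unsolvable {N n : ℕ}
    (μ : Fin N → ℝ) (E : Matrix (Fin N) (Fin n) ℝ)
    (hker : ∀ v : Fin n → ℝ, E.mulVec v = 0 → v = 0)
    (hcol : ¬ ∃ v : Fin n → ℝ, E.mulVec v = μ) :
    ¬ ∃ w : Fin n → ℝ, (PhiMat μ E).mulVec w = μ := by
  change μ ∉ (PhiMat μ E).mulVecLin.range
  rw [mulVecLin_phiMat]
  exact consistency_system_unsolvable_general _ _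
    ((LinearMap.ker_eq_bot'.2 hker).trans_le bot_le) hcol
end
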